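/- The polynomial x^7 + 45927 x^5 + 24 is irreducible over ℚ (Eisenstein at 3), and the associated septic field K is not monogenic; in fact 2 divides the index of every integral generator of K. -/

import Mathlib

open NumberField Polynomial

theorem aux_irred : Irreducible (X ^ 7 + C (45927 : ℚ) * X ^ 5 + C (24 : ℚ)) := by
  have hm : (X ^ 7 + C (45927 : ℤ) * X ^ 5 + C (24 : ℤ)).Monic := by monicity!
  have hd : (X ^ 7 + C (45927 : ℤ) * X ^ 5 + C (24 : ℤ)).natDegree = 7 := by compute_degree!
  have h3 : (Ideal.span {(3 : ℤ)}).IsPrime := by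
    rw [Ideal.span_singleton_prime (by norm_num)]
    exact Int.prime_three
  have h : Irreducible (X ^ 7 + C (45927 : ℤ) * X ^ 5 + C (24 : ℤ)) := by
    apply irreducible_of_eisenstein_criterion h3
    · rw [hm.leadingCoeff, Ideal.mem_span_singleton]; norm_num
    · intro n hn
      rw [Polynomial.degree_eq_natDegree hm.ne_zero, hd] at hn
      have hn' : n < 7 := by exact_mod_cast hn
      rw [Ideal.mem_span_singleton]
      interval_cases n <;> simp [coeff_X, coeff_C, coeff_X_pow] <;> norm_num
    · rw [Polynomial.degree_eq_natDegree hm.ne_zero, hd]; norm_num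
    · rw [Ideal.span_singleton_pow, Ideal.mem_span_singleton]
      simp [coeff_X_pow]
    · exact hm.isPrimitive
  have := (Polynomial.IsPrimitive.Int.irreducible_iff_irreducible_map_cast hm.isPrimitive).1 h
  have e45 : (C (45927 : ℚ)) = (45927 : ℚ[X]) := map_ofNat C 45927
  have e24 : (C (24 : ℚ)) = (24 : ℚ[X]) := map_ofNat C 24
  rw [e45, e24]
  simpa using this

theorem aux_hensel (a : ℤ) (h1 : (16 : ℤ) ∣ a ^ 7 + 45927 * a ^ 5 + 24)
    (h2 : ¬ (4 : ℤ) ∣ 7 * a ^ 6 + 45927 * (5 * a ^ 4))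
    (h3 : (2 : ℤ) ∣ 7 * a ^ 6 + 45927 * (5 * a ^ 4)) :
    ∃ z c : ℤ_[2], z ^ 7 + 45927 * z ^ 5 + 24 = 0 ∧ z = a + 4 * c := by
  let F : ℤ[X] := X ^ 7 + C (45927 : ℤ) * X ^ 5 + C (24 : ℤ)
  have e1 : F.aeval (a : ℤ_[2]) = ((a ^ 7 + 45927 * a ^ 5 + 24 : ℤ) : ℤ_[2]) := by
    simp [F, map_ofNat]
  have e2 : F.derivative.aeval (a : ℤ_[2]) =
      ((7 * a ^ 6 + 45927 * (5 * a ^ 4) : ℤ) : ℤ_[2]) := by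
    simp [F, map_ofNat]
  have n1 : ‖F.aeval (a : ℤ_[2])‖ ≤ ((2 : ℕ) : ℝ) ^ (-(4 : ℕ) : ℤ) := by
    rw [e1, PadicInt.norm_int_le_pow_iff_dvd]
    exact_mod_cast h1
  have n2 : ¬ ‖F.derivative.aeval (a : ℤ_[2])‖ ≤ ((2 : ℕ) : ℝ) ^ (-(2 : ℕ) : ℤ) := by
    rw [e2, PadicInt.norm_int_le_pow_iff_dvd]
    exact_mod_cast h2
  have n3 : ‖F.derivative.aeval (a : ℤ_[2])‖ ≤ ((2 : ℕ) : ℝ) ^ (-(1 : ℕ) : ℤ) := by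
    rw [e2, PadicInt.norm_int_le_pow_iff_dvd]
    exact_mod_cast h3
  have hn : ‖F.aeval (a : ℤ_[2])‖ < ‖F.derivative.aeval (a : ℤ_[2])‖ ^ 2 := by
    norm_num at n1 n2 ⊢
    nlinarith
  obtain ⟨z, hz, hz2, -, -⟩ := hensels_lemma hn
  have h4 : ‖z - (a : ℤ_[2])‖ ≤ ((2 : ℕ) : ℝ) ^ (-(2 : ℕ) : ℤ) := by
    have := (PadicInt.norm_le_pow_iff_norm_lt_pow_add_one (z - (a : ℤ_[2])) (-(2 : ℕ) : ℤ)).2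
    apply this
    refine lt_of_lt_of_le hz2 (n3.trans (le_of_eq ?_))
    norm_num
  rw [PadicInt.norm_le_pow_iff_mem_span_pow, Ideal.mem_span_singleton] at h4
  obtain ⟨c, hc⟩ := h4
  refine ⟨z, c, by simpa [F, map_ofNat] using hz, ?_⟩
  push_cast at hc
  linear_combination hc

theorem aux_beta {K : Type} [Field K] [NumberField K] (t : K)
    (h : t ^ 7 + 45927 * t ^ 5 + 24 = 0) : IsIntegral ℤ ((t ^ 3 - t ^ 2) / 2) := by
  refine ⟨X ^ 7 + C (-45927) * X ^ 6 + C 24218860075578 * X ^ 5 + C (-413322) * X ^ 4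
    + C (-15820014420) * X ^ 3 + C 126 * X ^ 2 + C 2066778 * X + C 206784, by monicity!, ?_⟩
  simp only [eval₂_add, eval₂_mul, eval₂_pow, eval₂_X, eval₂_C]
  simp only [eq_intCast]
  push_cast
  linear_combination ((8616)*t^0 + (-344463/8)*t^2 + (344463/8)*t^3 + (21/16)*t^4 + (-131902365/8)*t^5 + (329583639/4)*t^6 + (-10546653329/64)*t^7 + (5273280733/32)*t^8 + (-10546217031/128)*t^9 + (2108876021/128)*t^10 + (7175/4)*t^11 + (-22953/64)*t^12 + (-7/128)*t^13 + (1/128)*t^14) * h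

section
variable {K : Type} [Field K] [NumberField K] {θ : K}

theorem aux_minpoly (h : θ ^ 7 + 45927 * θ ^ 5 + 24 = 0) :
    minpoly ℚ θ = X ^ 7 + C (45927 : ℚ) * X ^ 5 + C (24 : ℚ) := by
  symm
  apply minpoly.eq_of_irreducible_of_monic aux_irred
  · simpa using h
  · monicity!

theorem aux_hom (h : θ ^ 7 + 45927 * θ ^ 5 + 24 = 0) (ht : Algebra.adjoin ℚ {θ} = ⊤)
    (z : ℤ_[2]) (hz : z ^ 7 + 45927 * z ^ 5 + 24 = 0) (t : 𝓞 K) (htt : (t : K) = θ) :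
    ∃ φ : 𝓞 K →+* ℤ_[2], φ t = z := by
  let pb := PowerBasis.ofAdjoinEqTop (Algebra.IsIntegral.isIntegral θ) ht
  have hg : pb.gen = θ := PowerBasis.ofAdjoinEqTop_gen _ _
  have hr : aeval (z : ℚ_[2]) (minpoly ℚ pb.gen) = 0 := by
    rw [hg, aux_minpoly h]
    simp
    exact_mod_cast congrArg (fun x : ℤ_[2] => (x : ℚ_[2])) hz
  let ψ : K →ₐ[ℚ] ℚ_[2] := pb.lift _ hr
  have hψ : ψ θ = z := by
    have := pb.lift_gen _ hr
    rwa [hg] at this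
  have hmem : ∀ x : 𝓞 K, ((ψ : K →+* ℚ_[2]).comp (algebraMap (𝓞 K) K)) x ∈
      PadicInt.subring 2 := by
    intro x
    have hx : IsIntegral ℤ (ψ (x : K)) := (RingOfIntegers.isIntegral_coe x).map (ψ.restrictScalars ℤ)
    have hx' : IsIntegral ℤ_[2] (ψ (x : K)) := hx.tower_top
    obtain ⟨y, hy⟩ := IsIntegrallyClosed.isIntegral_iff.1 hx'
    have : ψ (x : K) ∈ PadicInt.subring 2 := by
      rw [← hy]; exact y.2
    exact this
  refine ⟨RingHom.codRestrict _ (PadicInt.subring 2) hmem, ?_⟩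
  apply Subtype.ext
  change ψ (t : K) = z
  rw [htt]
  exact hψ

theorem aux_norm (h : θ ^ 7 + 45927 * θ ^ 5 + 24 = 0) (ht : Algebra.adjoin ℚ {θ} = ⊤) :
    Algebra.norm ℚ θ = -24 ∧ Module.finrank ℚ K = 7 := by
  let pb := PowerBasis.ofAdjoinEqTop (Algebra.IsIntegral.isIntegral θ) ht
  have hg : pb.gen = θ := PowerBasis.ofAdjoinEqTop_gen _ _
  have hd : (X ^ 7 + C (45927 : ℚ) * X ^ 5 + C (24 : ℚ)).natDegree = 7 := by compute_degree!
  have hdim : pb.dim = 7 := by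
    rw [← pb.natDegree_minpoly, hg, aux_minpoly h, hd]
  constructor
  · have := Algebra.PowerBasis.norm_gen_eq_coeff_zero_minpoly pb
    rw [hdim, hg, aux_minpoly h] at this
    rw [this]
    simp [coeff_X_pow]
    norm_num
  · rw [pb.finrank, hdim]

theorem aux_hom3 (h : θ ^ 7 + 45927 * θ ^ 5 + 24 = 0) (ht : Algebra.adjoin ℚ {θ} = ⊤)
    (t : 𝓞 K) (htt : (t : K) = θ) :
    ∃ φ : 𝓞 K →+* ZMod 2, φ t = 0 := by
  obtain ⟨hN, hfr⟩ := aux_norm h ht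
  have hint : t ^ 5 * (t ^ 2 + 45927) = -(2 ^ 3 * 3) := by
    apply RingOfIntegers.ext
    simp [htt, map_ofNat]
    linear_combination h
  have hne : Ideal.span {t, 2} ≠ ⊤ := by
    intro htop
    have hc : IsCoprime t 2 := by
      rw [Ideal.eq_top_iff_one, Ideal.mem_span_pair] at htop
      exact htop
    have hc' : IsCoprime (t ^ 5) (2 ^ 3) := hc.pow
    have h3 : t ^ 5 ∣ 3 := by
      apply hc'.dvd_of_dvd_mul_left
      rw [← dvd_neg]
      exact ⟨_, hint.symm⟩
    obtain ⟨d, hd⟩ := (dvd_pow_self t (by norm_num : 5 ≠ 0)).trans h3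
    have hd' : algebraMap ℚ K 3 = θ * d := by
      have := congrArg (fun x : 𝓞 K => (x : K)) hd
      simp only [map_mul, htt, map_ofNat] at this
      rw [map_ofNat]
      exact this
    have := congrArg (Algebra.norm ℚ) hd'
    rw [map_mul, hN, Algebra.norm_algebraMap, hfr, ← Algebra.coe_norm_int] at this
    have h' : (3 : ℤ) ^ 7 = -24 * Algebra.norm ℤ d := by exact_mod_cast this
    omega
  obtain ⟨P, hP, hle⟩ := Ideal.exists_le_maximal _ hne
  have htP : t ∈ P := hle (Ideal.subset_span (by simp))
  have h2P : (2 : 𝓞 K) ∈ P := hle (Ideal.subset_span (by simp))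
  have hodd : ∀ n : ℕ, ((2 * n + 1 : ℕ) : 𝓞 K) ∉ P := by
    intro n hn
    apply hP.ne_top
    rw [Ideal.eq_top_iff_one]
    have := P.sub_mem hn (P.mul_mem_right (n : 𝓞 K) h2P)
    push_cast at this
    simpa using this
  have h20 : (2 : 𝓞 K) ≠ 0 := by norm_num
  have ht0 : t ≠ 0 := by
    rintro rfl
    norm_num at hint
  have hP0 : P ≠ ⊥ := by
    rintro rfl
    exact h20 (by simpa using h2P)
  have hpr : Prime P := Ideal.prime_of_isPrime hP0 hP.isPrime
  have hfin : ∀ x : 𝓞 K, x ≠ 0 → FiniteMultiplicity P (Ideal.span {x}) := by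
    intro x hx
    apply FiniteMultiplicity.of_prime_left hpr
    simpa using hx
  have hz : ∀ x : 𝓞 K, x ∉ P → emultiplicity P (Ideal.span {x}) = 0 := by
    intro x hx
    rw [emultiplicity_eq_zero, Ideal.dvd_span_singleton]
    exact hx
  have hmul : ∀ x y : 𝓞 K, emultiplicity P (Ideal.span {x * y}) =
      emultiplicity P (Ideal.span {x}) + emultiplicity P (Ideal.span {y}) := by
    intro x y
    rw [← Ideal.span_singleton_mul_span_singleton, emultiplicity_mul hpr]
  have hpow : ∀ (x : 𝓞 K) (n : ℕ), emultiplicity P (Ideal.span {x ^ n}) =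
      n * emultiplicity P (Ideal.span {x}) := by
    intro x n
    rw [← Ideal.span_singleton_pow, emultiplicity_pow hpr]
  have hu : t ^ 2 + 45927 ∉ P := by
    intro hh
    apply hodd 22963
    have := P.sub_mem hh (P.mul_mem_right t htP)
    push_cast
    convert this using 1
    ring
  have h3 : (3 : 𝓞 K) ∉ P := by
    have := hodd 1
    norm_num at this
    exact this
  have key : 5 * multiplicity P (Ideal.span {t}) = 3 * multiplicity P (Ideal.span {(2 : 𝓞 K)}) := by
    have := congrArg (fun x : 𝓞 K => emultiplicity P (Ideal.span {x})) hint
    simp only [Ideal.span_singleton_neg] at this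
    rw [hmul, hmul, hz _ hu, hz _ h3, hpow, hpow, (hfin t ht0).emultiplicity_eq_multiplicity,
      (hfin 2 h20).emultiplicity_eq_multiplicity] at this
    exact_mod_cast this
  have hpos : 0 < multiplicity P (Ideal.span {(2 : 𝓞 K)}) := by
    apply Nat.pos_of_ne_zero
    rw [multiplicity_ne_zero, Ideal.dvd_span_singleton]
    exact h2P
  have h5 : P ^ 5 ∣ Ideal.span {(2 : 𝓞 K)} :=
    pow_dvd_of_le_multiplicity (by omega)
  have hdvd := map_dvd Ideal.absNorm h5
  have hn2 : Ideal.absNorm (Ideal.span {(2 : 𝓞 K)}) = 2 ^ 7 := by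
    rw [Ideal.absNorm_span_singleton]
    have h2 : Algebra.norm ℤ (2 : 𝓞 K) = 2 ^ 7 := by
      have := Algebra.norm_algebraMap (S := 𝓞 K) (2 : ℤ)
      rw [RingOfIntegers.rank, hfr] at this
      simpa using this
    rw [h2]; rfl
  rw [map_pow, hn2] at hdvd
  have hP1 : Ideal.absNorm P ≠ 1 := by
    rw [Ne, Ideal.absNorm_eq_one_iff]
    exact hP.ne_top
  obtain ⟨k, -, hk⟩ := (Nat.dvd_prime_pow Nat.prime_two).1
    ((dvd_pow_self _ (by norm_num : 5 ≠ 0)).trans hdvd)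
  have hPn : Ideal.absNorm P = 2 := by
    rw [hk, ← pow_mul, Nat.pow_dvd_pow_iff_le_right (by norm_num)] at hdvd
    have : k ≠ 0 := by rintro rfl; exact hP1 (by simpa using hk)
    have : k = 1 := by omega
    rw [hk, this]; rfl
  rw [Ideal.absNorm_apply, Submodule.cardQuot_apply] at hPn
  have hfinite : Finite (𝓞 K ⧸ P) := Nat.finite_of_card_ne_zero (by rw [hPn]; norm_num)
  letI := Fintype.ofFinite (𝓞 K ⧸ P)
  rw [Nat.card_eq_fintype_card] at hPn
  refine ⟨((ZMod.ringEquivOfPrime _ Nat.prime_two hPn).symm : (𝓞 K ⧸ P) →+* ZMod 2).comp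
    (Ideal.Quotient.mk P), ?_⟩
  have : Ideal.Quotient.mk P t = 0 := Ideal.Quotient.eq_zero_iff_mem.2 htP
  simp [this]

theorem aux_pair (φ ψ : 𝓞 K →+* ZMod 2) (x η : 𝓞 K) (hx : φ x ≠ ψ x) (hη : φ η = ψ η) :
    2 ∣ (Algebra.adjoin ℤ {η}).toSubring.toAddSubgroup.index := by
  by_contra hodd
  set n := (Algebra.adjoin ℤ {η}).toSubring.toAddSubgroup.index with hn
  have hmem : n • x ∈ (Algebra.adjoin ℤ {η}).toSubring.toAddSubgroup :=
    AddSubgroup.nsmul_index_mem _ x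
  have hle : Algebra.adjoin ℤ {η} ≤ AlgHom.equalizer φ.toIntAlgHom ψ.toIntAlgHom := by
    apply Algebra.adjoin_le
    rintro y rfl
    exact hη
  have h1 : φ (n • x) = ψ (n • x) := hle hmem
  rw [map_nsmul, map_nsmul, nsmul_eq_mul, nsmul_eq_mul] at h1
  have h2 : (n : ZMod 2) = 1 := by
    rw [ZMod.natCast_eq_one_iff_odd]
    exact Nat.not_even_iff_odd.1 (fun he => hodd he.two_dvd)
  rw [h2, one_mul, one_mul] at h1
  exact hx h1

theorem aux_main (h : θ ^ 7 + 45927 * θ ^ 5 + 24 = 0) (ht : Algebra.adjoin ℚ {θ} = ⊤) (η : 𝓞 K) :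
    2 ∣ (Algebra.adjoin ℤ {η}).toSubring.toAddSubgroup.index := by
  have hti : IsIntegral ℤ θ :=
    ⟨X ^ 7 + C (45927 : ℤ) * X ^ 5 + C (24 : ℤ), by monicity!, by simpa using h⟩
  let t : 𝓞 K := ⟨θ, hti⟩
  let b : 𝓞 K := ⟨_, aux_beta θ h⟩
  have hb : 2 * b = t ^ 2 * (t - 1) := by
    apply RingOfIntegers.ext
    have h1 : ((t : 𝓞 K) : K) = θ := rfl
    have h2 : ((b : 𝓞 K) : K) = (θ ^ 3 - θ ^ 2) / 2 := rfl
    simp only [map_mul, map_pow, map_sub, map_one, map_ofNat, h1, h2]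
    ring
  obtain ⟨z1, c1, hz1, hc1⟩ := aux_hensel 1 (by norm_num) (by norm_num) (by norm_num)
  obtain ⟨z2, c2, hz2, hc2⟩ := aux_hensel (-1) (by norm_num) (by norm_num) (by norm_num)
  obtain ⟨f1, hf1⟩ := aux_hom h ht z1 hz1 t rfl
  obtain ⟨f2, hf2⟩ := aux_hom h ht z2 hz2 t rfl
  obtain ⟨φ3, h3⟩ := aux_hom3 h ht t rfl
  have h20 : (2 : ℤ_[2]) ≠ 0 := by norm_num
  have htwo : (2 : ZMod 2) = 0 := rfl
  have hfour : (4 : ZMod 2) = 0 := rfl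
  push_cast at hc1 hc2
  have hb1 : f1 b = z1 ^ 2 * (2 * c1) := by
    apply mul_left_cancel₀ h20
    have := congrArg f1 hb
    simp only [map_mul, map_pow, map_sub, map_one, map_ofNat, hf1] at this
    rw [this]
    linear_combination z1 ^ 2 * hc1
  have hb2 : f2 b = z2 ^ 2 * (2 * c2 - 1) := by
    apply mul_left_cancel₀ h20
    have := congrArg f2 hb
    simp only [map_mul, map_pow, map_sub, map_one, map_ofNat, hf2] at this
    rw [this]
    linear_combination z2 ^ 2 * hc2
  let φ1 : 𝓞 K →+* ZMod 2 := PadicInt.toZMod.comp f1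
  let φ2 : 𝓞 K →+* ZMod 2 := PadicInt.toZMod.comp f2
  have e1 : φ1 t = 1 := by
    simp [φ1, hf1, hc1, hfour, map_ofNat]
  have e2 : φ2 t = 1 := by
    simp [φ2, hf2, hc2, hfour, map_ofNat]
  have g1 : φ1 b = 0 := by
    simp [φ1, hb1, htwo, map_ofNat]
  have g2 : φ2 b = 1 := by
    simp [φ2, hb2, hc2, htwo, hfour, map_ofNat]
  have pig : ∀ a b c : ZMod 2, a = b ∨ a = c ∨ b = c := by decide
  rcases pig (φ1 η) (φ2 η) (φ3 η) with hh | hh | hh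
  · exact aux_pair φ1 φ2 b η (by rw [g1, g2]; decide) hh
  · exact aux_pair φ1 φ3 t η (by rw [e1, h3]; decide) hh
  · exact aux_pair φ2 φ3 t η (by rw [e2, h3]; decide) hh

end

/-- `x^7 + 45927 x^5 + 24` is irreducible over `ℚ`, and for the septic field `K` it
defines, `2` divides the index of every integral generator of `K`; in particular `K`
is not monogenic. -/
theorem not_monogenic_example_45927_24 :
    Irreducible (X ^ 7 + C (45927 : ℚ) * X ^ 5 + C (24 : ℚ)) ∧
    ∀ (K : Type) [Field K] [NumberField K] (θ : K),
      θ ^ 7 + 45927 * θ ^ 5 + 24 = 0 → Algebra.adjoin ℚ {θ} = ⊤ →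
      (∀ η : 𝓞 K, Algebra.adjoin ℚ {(η : K)} = ⊤ →
          2 ∣ (Algebra.adjoin ℤ {η}).toSubring.toAddSubgroup.index) ∧
        ¬ ∃ η : 𝓞 K, Algebra.adjoin ℤ {η} = ⊤ := by
  refine ⟨aux_irred, ?_⟩
  intro K _ _ θ h ht
  refine ⟨fun η _ => aux_main h ht η, ?_⟩
  rintro ⟨η, hη⟩
  have h2 := aux_main h ht η
  have h1 : (Algebra.adjoin ℤ {η}).toSubring.toAddSubgroup.index = 1 := by
    rw [AddSubgroup.index_eq_one, hη]
    rfl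
  rw [h1] at h2
  norm_num at h2
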